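/- arXiv:math-ph/0401042 — 2 statements merged into one kernel-verified Lean document; each statement's English description precedes it below -/
import Mathlib

section
/- For every integer k, one has the lower bound 12 |k| π² ≤ I_k. -/
/- Common setting: Skyrme maps φ : ℝ³ → S³ ⊂ ℝ⁴ with weak partial derivatives. -/

open MeasureTheory Real Filter
open scoped Topology ENNReal BigOperators

noncomputable section

abbrev R3 : Type := Fin 3 → ℝ
abbrev R4 : Type := Fin 4 → ℝ

/-- Euclidean dot product on ℝ⁴. -/
def dot (u v : R4) : ℝ := ∑ a, u a * v a

/-- Squared Euclidean norm on ℝ⁴. -/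
def nsq (u : R4) : ℝ := dot u u

/-- |u∧v|² = |u|²|v|² − ⟨u,v⟩². -/
def wedgeSq (u v : R4) : ℝ := nsq u * nsq v - (dot u v) ^ 2

/-- Gram determinant of three vectors of ℝ⁴. -/
def gram (u v w : R4) : ℝ :=
  Matrix.det !![dot u u, dot u v, dot u w; dot v u, dot v v, dot v w; dot w u, dot w v, dot w w]

/-- Determinant of the 4×4 matrix with columns a, b, c, d. -/
def det4 (a b c d : R4) : ℝ := Matrix.det (Matrix.of fun i j => ![a, b, c, d] j i)

/-- Smooth compactly supported test functions on ℝ³. -/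
def IsTestFun {E : Type*} [NormedAddCommGroup E] [NormedSpace ℝ E] (ψ : R3 → E) : Prop :=
  ContDiff ℝ (⊤ : ℕ∞) ψ ∧ HasCompactSupport ψ

/-- A weakly differentiable map φ : ℝ³ → S³ ⊂ ℝ⁴ together with its weak
partial derivatives `pderiv i = ∂ᵢφ`. -/
structure SkyrmeMap where
  toFun : R3 → R4
  pderiv : Fin 3 → R3 → R4
  meas : Measurable toFun
  pderiv_locInt : ∀ i, LocallyIntegrable (pderiv i) volume
  sphere : ∀ᵐ x : R3, nsq (toFun x) = 1
  weak : ∀ (i : Fin 3) (a : Fin 4) (ψ : R3 → ℝ), IsTestFun ψ →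
    ∫ x : R3, fderiv ℝ ψ x (Pi.single i 1) * toFun x a
      = - ∫ x : R3, ψ x * pderiv i x a

/-- |∇φ|² = Σᵢ |∂ᵢφ|². -/
def gradSq (φ : SkyrmeMap) (x : R3) : ℝ := ∑ i, nsq (φ.pderiv i x)

/-- |A(φ)|² = Σᵢⱼ |∂ᵢφ∧∂ⱼφ|². -/
def ASq (φ : SkyrmeMap) (x : R3) : ℝ := ∑ i, ∑ j, wedgeSq (φ.pderiv i x) (φ.pderiv j x)

/-- The Skyrme energy density |∇φ|² + |A(φ)|². -/
def energyDensity (φ : SkyrmeMap) (x : R3) : ℝ := gradSq φ x + ASq φ x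

/-- φ ∈ X : finite Skyrme energy. -/
def memX (φ : SkyrmeMap) : Prop := Integrable (energyDensity φ) volume

/-- The Skyrme energy ℰ(φ). -/
def energy (φ : SkyrmeMap) : ℝ := ∫ x, energyDensity φ x

/-- det(φ, ∇φ)(x). -/
def detDen (φ : SkyrmeMap) (x : R3) : ℝ :=
  det4 (φ.toFun x) (φ.pderiv 0 x) (φ.pderiv 1 x) (φ.pderiv 2 x)

/-- The topological degree d(φ) = (1/(2π²)) ∫ det(φ,∇φ). -/
def degree (φ : SkyrmeMap) : ℝ := (1 / (2 * π ^ 2)) * ∫ x, detDen φ x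

/-- I_k = inf of the energy over maps of degree k. -/
def Skyrme.I (k : ℤ) : ℝ :=
  sInf {E : ℝ | ∃ φ : SkyrmeMap, memX φ ∧ degree φ = (k : ℝ) ∧ energy φ = E}

/-- The north pole P = (0,0,0,1) of S³. -/
def northPole : R4 := ![0, 0, 0, 1]

/-- The Euclidean ball B(y,r) in ℝ³. -/
def eball (y : R3) (r : ℝ) : Set R3 := {x | ∑ i, (x i - y i) ^ 2 < r ^ 2}

lemma cs4 (a b : R4) : (dot a b)^2 ≤ nsq a * nsq b := by
  simp only [nsq, dot, Fin.sum_univ_four]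
  nlinarith [sq_nonneg (a 0 * b 1 - a 1 * b 0), sq_nonneg (a 0 * b 2 - a 2 * b 0), sq_nonneg (a 0 * b 3 - a 3 * b 0), sq_nonneg (a 1 * b 2 - a 2 * b 1), sq_nonneg (a 1 * b 3 - a 3 * b 1), sq_nonneg (a 2 * b 3 - a 3 * b 2)]

lemma nsq_nonneg (a : R4) : 0 ≤ nsq a := by
  simp only [nsq, dot]
  exact Finset.sum_nonneg fun i _ => mul_self_nonneg _

lemma wedge_nonneg (a b : R4) : 0 ≤ wedgeSq a b := by
  unfold wedgeSq; linarith [cs4 a b]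

lemma det4_expand (a b c d : R4) : det4 a b c d =
    a 0 * (b 1 * (c 2 * d 3 - c 3 * d 2) - b 2 * (c 1 * d 3 - c 3 * d 1) + b 3 * (c 1 * d 2 - c 2 * d 1))
    - a 1 * (b 0 * (c 2 * d 3 - c 3 * d 2) - b 2 * (c 0 * d 3 - c 3 * d 0) + b 3 * (c 0 * d 2 - c 2 * d 0))
    + a 2 * (b 0 * (c 1 * d 3 - c 3 * d 1) - b 1 * (c 0 * d 3 - c 3 * d 0) + b 3 * (c 0 * d 1 - c 1 * d 0))
    - a 3 * (b 0 * (c 1 * d 2 - c 2 * d 1) - b 1 * (c 0 * d 2 - c 2 * d 0) + b 2 * (c 0 * d 1 - c 1 * d 0)) := by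
  simp [det4, Matrix.det_succ_row_zero, Fin.sum_univ_succ, Fin.succAbove]
  ring

def crs (b c d : R4) : R4 := ![
    (b 1 * (c 2 * d 3 - c 3 * d 2) - b 2 * (c 1 * d 3 - c 3 * d 1) + b 3 * (c 1 * d 2 - c 2 * d 1)),
    -(b 0 * (c 2 * d 3 - c 3 * d 2) - b 2 * (c 0 * d 3 - c 3 * d 0) + b 3 * (c 0 * d 2 - c 2 * d 0)),
    (b 0 * (c 1 * d 3 - c 3 * d 1) - b 1 * (c 0 * d 3 - c 3 * d 0) + b 3 * (c 0 * d 1 - c 1 * d 0)),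
    -(b 0 * (c 1 * d 2 - c 2 * d 1) - b 1 * (c 0 * d 2 - c 2 * d 0) + b 2 * (c 0 * d 1 - c 1 * d 0))]

lemma det4_eq_dot (a b c d : R4) : det4 a b c d = dot a (crs b c d) := by
  rw [det4_expand]; simp [dot, crs, Fin.sum_univ_four]; ring

lemma crs_identity (u v w : R4) : nsq (crs u v w) + nsq (dot u w • v - dot v w • u) =
    wedgeSq u v * nsq w := by
  simp [nsq, wedgeSq, dot, crs, Fin.sum_univ_four]; ring

lemma crs_le (u v w : R4) : nsq (crs u v w) ≤ wedgeSq u v * nsq w := by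
  linarith [crs_identity u v w, nsq_nonneg (dot u w • v - dot v w • u)]

lemma det_amgm (a u v w : R4) (ha : nsq a = 1) : 2 * |det4 a u v w| ≤ wedgeSq u v + nsq w := by
  have h1 : (det4 a u v w)^2 ≤ wedgeSq u v * nsq w := by
    rw [det4_eq_dot]
    have := cs4 a (crs u v w)
    rw [ha, one_mul] at this
    exact this.trans (crs_le u v w)
  have h2 := wedge_nonneg u v
  have h3 := nsq_nonneg w
  apply abs_le_of_sq_le_sq' _ (by positivity) |>.2
  rw [mul_pow, sq_abs]
  nlinarith [sq_nonneg (wedgeSq u v - nsq w)]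

lemma density_bound (φ : SkyrmeMap) (x : R3) (hx : nsq (φ.toFun x) = 1) :
    6 * |detDen φ x| ≤ energyDensity φ x := by
  unfold detDen energyDensity gradSq ASq
  have h1 := det_amgm (φ.toFun x) (φ.pderiv 0 x) (φ.pderiv 1 x) (φ.pderiv 2 x) hx
  have h2 := det_amgm (φ.toFun x) (φ.pderiv 1 x) (φ.pderiv 2 x) (φ.pderiv 0 x) hx
  have h3 := det_amgm (φ.toFun x) (φ.pderiv 2 x) (φ.pderiv 0 x) (φ.pderiv 1 x) hx
  have e2 : det4 (φ.toFun x) (φ.pderiv 1 x) (φ.pderiv 2 x) (φ.pderiv 0 x) =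
      det4 (φ.toFun x) (φ.pderiv 0 x) (φ.pderiv 1 x) (φ.pderiv 2 x) := by
    rw [det4_expand, det4_expand]; ring
  have e3 : det4 (φ.toFun x) (φ.pderiv 2 x) (φ.pderiv 0 x) (φ.pderiv 1 x) =
      det4 (φ.toFun x) (φ.pderiv 0 x) (φ.pderiv 1 x) (φ.pderiv 2 x) := by
    rw [det4_expand, det4_expand]; ring
  rw [e2] at h2
  rw [e3] at h3
  have hw := fun i j => wedge_nonneg (φ.pderiv i x) (φ.pderiv j x)
  simp only [Fin.sum_univ_three]
  linarith [hw 0 0, hw 0 1, hw 0 2, hw 1 0, hw 1 1, hw 1 2, hw 2 0, hw 2 1, hw 2 2]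

lemma energy_bound (φ : SkyrmeMap) (hφ : memX φ) :
    12 * |degree φ| * π ^ 2 ≤ energy φ := by
  have h : |∫ x, detDen φ x| ≤ ∫ x, (1 / 6 : ℝ) * energyDensity φ x := by
    refine abs_integral_le_integral_abs.trans ?_
    refine integral_mono_of_nonneg (ae_of_all _ fun x => abs_nonneg _) (hφ.const_mul _) ?_
    filter_upwards [φ.sphere] with x hx
    linarith [density_bound φ x hx]
  rw [integral_const_mul] at h
  have hp : (0 : ℝ) < π ^ 2 := by positivity
  unfold degree energy at *
  rw [abs_mul, abs_of_pos (by positivity)]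
  field_simp
  linarith

/-! Radial (hedgehog) maps of every degree. -/

def ang (k : ℤ) (t : ℝ) : ℝ := k * π * Real.smoothTransition (t - 1)

def hh (k : ℤ) (t : ℝ) : ℝ := Real.sin (ang k t) / √t

def cc (k : ℤ) (t : ℝ) : ℝ := Real.cos (ang k t)

def rsq (x : R3) : ℝ := x 0 ^ 2 + x 1 ^ 2 + x 2 ^ 2

lemma ang_contDiff (k : ℤ) : ContDiff ℝ 2 (ang k) := by
  unfold ang
  have : ContDiff ℝ 2 Real.smoothTransition := Real.smoothTransition.contDiff (n := 2)
  exact contDiff_const.mul (this.comp (contDiff_id.sub contDiff_const))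

lemma ang_low (k : ℤ) {t : ℝ} (h : t ≤ 1) : ang k t = 0 := by
  simp [ang, Real.smoothTransition.zero_of_nonpos (show t - 1 ≤ 0 by linarith)]

lemma ang_high (k : ℤ) {t : ℝ} (h : 2 ≤ t) : ang k t = k * π := by
  simp [ang, Real.smoothTransition.one_of_one_le (show 1 ≤ t - 1 by linarith)]

lemma hh_low (k : ℤ) {t : ℝ} (h : t ≤ 1) : hh k t = 0 := by simp [hh, ang_low k h]

lemma hh_high (k : ℤ) {t : ℝ} (h : 2 ≤ t) : hh k t = 0 := by
  simp [hh, ang_high k h]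

lemma hh_contDiff (k : ℤ) : ContDiff ℝ 2 (hh k) := by
  rw [contDiff_iff_contDiffAt]
  intro t
  rcases lt_or_ge t 1 with h | h
  · have : hh k =ᶠ[𝓝 t] fun _ => 0 := by
      filter_upwards [Iio_mem_nhds h] with s hs using hh_low k (le_of_lt hs)
    exact contDiffAt_const.congr_of_eventuallyEq this
  · have ht : 0 < t := by linarith
    unfold hh
    exact ((Real.contDiff_sin.comp (ang_contDiff k)).contDiffAt).div
      (contDiffAt_id.sqrt ht.ne') (Real.sqrt_pos.2 ht).ne'

lemma cc_contDiff (k : ℤ) : ContDiff ℝ 2 (cc k) :=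
  Real.contDiff_cos.comp (ang_contDiff k)

lemma dhh_high (k : ℤ) {t : ℝ} (h : 2 < t) : deriv (hh k) t = 0 := by
  have : hh k =ᶠ[𝓝 t] fun _ => 0 := by
    filter_upwards [Ioi_mem_nhds h] with s hs using hh_high k (le_of_lt hs)
  rw [this.deriv_eq]; simp

lemma dcc_high (k : ℤ) {t : ℝ} (h : 2 < t) : deriv (cc k) t = 0 := by
  have : cc k =ᶠ[𝓝 t] fun _ => Real.cos (k * π) := by
    filter_upwards [Ioi_mem_nhds h] with s hs
    simp [cc, ang_high k (le_of_lt hs)]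
  rw [this.deriv_eq]; simp

lemma cc_hh (k : ℤ) {t : ℝ} (h : 0 ≤ t) : hh k t ^ 2 * t + cc k t ^ 2 = 1 := by
  rcases h.eq_or_lt with rfl | h
  · simp [cc, ang_low]
  · unfold hh cc
    rw [div_pow, Real.sq_sqrt h.le, div_mul_cancel₀ _ h.ne', Real.sin_sq_add_cos_sq]

def hedge (k : ℤ) (x : R3) : R4 :=
  ![hh k (rsq x) * x 0, hh k (rsq x) * x 1, hh k (rsq x) * x 2, cc k (rsq x)]

def dhedge (k : ℤ) (i : Fin 3) (x : R3) : R4 :=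
  ![2 * deriv (hh k) (rsq x) * x i * x 0 + hh k (rsq x) * (if i = 0 then 1 else 0),
    2 * deriv (hh k) (rsq x) * x i * x 1 + hh k (rsq x) * (if i = 1 then 1 else 0),
    2 * deriv (hh k) (rsq x) * x i * x 2 + hh k (rsq x) * (if i = 2 then 1 else 0),
    2 * deriv (cc k) (rsq x) * x i]

lemma rsq_contDiff : ContDiff ℝ 2 rsq := by unfold rsq; fun_prop

lemma rsq_nonneg (x : R3) : 0 ≤ rsq x := by unfold rsq; positivity

lemma fderiv_coord (j i : Fin 3) (x : R3) :
    fderiv ℝ (fun y : R3 => y j) x (Pi.single i 1) = if i = j then 1 else 0 := by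
  have : HasFDerivAt (fun y : R3 => y j) (ContinuousLinearMap.proj (R := ℝ) (φ := fun _ : Fin 3 => ℝ) j) x :=
    (ContinuousLinearMap.proj (R := ℝ) (φ := fun _ : Fin 3 => ℝ) j).hasFDerivAt
  rw [this.fderiv]
  simp [Pi.single_apply, eq_comm]

lemma fderiv_rsq (i : Fin 3) (x : R3) :
    fderiv ℝ rsq x (Pi.single i 1) = 2 * x i := by
  have hd : ∀ j : Fin 3, HasFDerivAt (fun y : R3 => y j) (ContinuousLinearMap.proj (R := ℝ) (φ := fun _ : Fin 3 => ℝ) j) x :=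
    fun j => (ContinuousLinearMap.proj (R := ℝ) (φ := fun _ : Fin 3 => ℝ) j).hasFDerivAt
  have : HasFDerivAt rsq _ x := (((hd 0).pow 2).add ((hd 1).pow 2)).add ((hd 2).pow 2)
  rw [this.fderiv]
  fin_cases i <;> simp

lemma fderiv_radial (f : ℝ → ℝ) (hf : ContDiff ℝ 2 f) (i : Fin 3) (x : R3) :
    fderiv ℝ (fun y => f (rsq y)) x (Pi.single i 1) = 2 * deriv f (rsq x) * x i := by
  have h1 : HasDerivAt f (deriv f (rsq x)) (rsq x) :=
    (hf.differentiable (by norm_num) _).hasDerivAt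
  have h2 : HasFDerivAt rsq (fderiv ℝ rsq x) x :=
    (rsq_contDiff.differentiable (by norm_num) x).hasFDerivAt
  have := h1.comp_hasFDerivAt x h2
  have e : fderiv ℝ (fun y => f (rsq y)) x = _ := this.fderiv
  rw [e]
  simp [fderiv_rsq]; ring

lemma fderiv_radial_mul (f : ℝ → ℝ) (hf : ContDiff ℝ 2 f) (i j : Fin 3) (x : R3) :
    fderiv ℝ (fun y => f (rsq y) * y j) x (Pi.single i 1) =
      2 * deriv f (rsq x) * x i * x j + f (rsq x) * (if i = j then 1 else 0) := by
  have h1 : DifferentiableAt ℝ (fun y => f (rsq y)) x :=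
    (hf.comp rsq_contDiff).differentiable (by norm_num) x
  have h2 : DifferentiableAt ℝ (fun y : R3 => y j) x := by fun_prop
  have e : fderiv ℝ (fun y => f (rsq y) * y j) x = _ := fderiv_fun_mul h1 h2
  rw [e]
  simp [fderiv_radial f hf, fderiv_coord]; ring

lemma hedge_contDiff (k : ℤ) (a : Fin 4) : ContDiff ℝ 2 (fun x => hedge k x a) := by
  have h1 := (hh_contDiff k).comp rsq_contDiff
  have h2 := (cc_contDiff k).comp rsq_contDiff
  have h3 : ∀ j : Fin 3, ContDiff ℝ 2 (fun y : R3 => y j) := fun j => by fun_prop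
  fin_cases a
  · exact h1.mul (h3 0)
  · exact h1.mul (h3 1)
  · exact h1.mul (h3 2)
  · exact h2

lemma dhedge_eq (k : ℤ) (i : Fin 3) (a : Fin 4) (x : R3) :
    fderiv ℝ (fun y => hedge k y a) x (Pi.single i 1) = dhedge k i x a := by
  fin_cases a
  · exact fderiv_radial_mul _ (hh_contDiff k) i 0 x
  · exact fderiv_radial_mul _ (hh_contDiff k) i 1 x
  · exact fderiv_radial_mul _ (hh_contDiff k) i 2 x
  · exact fderiv_radial _ (cc_contDiff k) i x

lemma dhedge_cont (k : ℤ) (i : Fin 3) : Continuous (dhedge k i) := by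
  refine continuous_pi fun a => ?_
  have : (fun x => dhedge k i x a) = fun x => fderiv ℝ (fun y => hedge k y a) x (Pi.single i 1) := by
    funext x; rw [dhedge_eq]
  rw [this]
  exact ((hedge_contDiff k a).continuous_fderiv (by norm_num)).clm_apply continuous_const

lemma hedge_cont (k : ℤ) : Continuous (hedge k) :=
  continuous_pi fun a => (hedge_contDiff k a).continuous

def hedgeMap (k : ℤ) : SkyrmeMap where
  toFun := hedge k
  pderiv := dhedge k
  meas := (hedge_cont k).measurable
  pderiv_locInt i := (dhedge_cont k i).locallyIntegrable
  sphere := ae_of_all _ fun x => by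
    have := cc_hh k (rsq_nonneg x)
    simp only [nsq, dot, hedge, Fin.sum_univ_four]
    simp
    have e : rsq x = x 0 ^ 2 + x 1 ^ 2 + x 2 ^ 2 := rfl
    generalize hh k (rsq x) = h at *
    generalize cc k (rsq x) = c at *
    rw [e] at this
    linear_combination this
  weak i a ψ hψ := by
    have hc : Continuous (fun x => fderiv ℝ ψ x (Pi.single i 1)) :=
      (hψ.1.continuous_fderiv (by simp)).clm_apply continuous_const
    have hs : HasCompactSupport (fun x => fderiv ℝ ψ x (Pi.single i 1)) :=
      hψ.2.fderiv_apply ℝ (Pi.single i 1)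
    have ca : Continuous (fun x => hedge k x a) := (hedge_contDiff k a).continuous
    have cd : Continuous (fun x => dhedge k i x a) := (continuous_apply a).comp (dhedge_cont k i)
    have key := integral_mul_fderiv_eq_neg_fderiv_mul_of_integrable (μ := (volume : Measure R3))
      (f := ψ) (g := fun x => hedge k x a) (v := Pi.single i 1)
      ((hc.mul ca).integrable_of_hasCompactSupport hs.mul_right)
      (by
        simp only [dhedge_eq]
        exact (hψ.1.continuous.mul cd).integrable_of_hasCompactSupport hψ.2.mul_right)
      ((hψ.1.continuous.mul ca).integrable_of_hasCompactSupport hψ.2.mul_right)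
      (fun x _ => hψ.1.differentiable (by simp) x)
      (fun x _ => (hedge_contDiff k a).differentiable (by norm_num) x)
    simp only [dhedge_eq] at key
    rw [key, neg_neg]

lemma hedge_memX (k : ℤ) : memX (hedgeMap k) := by
  have hc : Continuous (energyDensity (hedgeMap k)) := by
    have := fun i a => (continuous_apply a).comp (dhedge_cont k i)
    simp only [Function.comp_def] at this
    unfold energyDensity gradSq ASq wedgeSq nsq dot hedgeMap
    fun_prop
  refine hc.integrable_of_hasCompactSupport
    (HasCompactSupport.intro (isCompact_closedBall (0 : R3) 2) fun x hx => ?_)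
  have hr : 2 < rsq x := by
    by_contra hcon
    apply hx
    push Not at hcon
    unfold rsq at hcon
    rw [mem_closedBall_zero_iff, pi_norm_le_iff_of_nonneg (by norm_num)]
    intro i
    rw [Real.norm_eq_abs]
    apply abs_le_of_sq_le_sq _ (by norm_num)
    fin_cases i <;> simp <;> nlinarith [sq_nonneg (x 0), sq_nonneg (x 1), sq_nonneg (x 2)]
  have hz : ∀ i, dhedge k i x = 0 := by
    intro i
    ext a
    fin_cases a <;> simp [dhedge, dhh_high k hr, dcc_high k hr, hh_high k hr.le]
  simp [energyDensity, gradSq, ASq, wedgeSq, nsq, dot, hedgeMap, hz]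

def gg (k : ℤ) (t : ℝ) : ℝ :=
  hh k t ^ 2 * (cc k t * hh k t + 2 * t * (cc k t * deriv (hh k) t - deriv (cc k) t * hh k t))

lemma hedge_det (k : ℤ) (x : R3) : detDen (hedgeMap k) x = - gg k (rsq x) := by
  unfold detDen
  rw [det4_expand]
  simp [hedgeMap, hedge, dhedge, gg]
  generalize deriv (hh k) (rsq x) = h'
  generalize deriv (cc k) (rsq x) = c'
  generalize hh k (rsq x) = h
  generalize cc k (rsq x) = c
  unfold rsq
  ring

lemma ang_hasDeriv (k : ℤ) (r : ℝ) :
    HasDerivAt (fun r => ang k (r ^ 2)) (deriv (ang k) (r ^ 2) * (2 * r)) r := by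
  have h1 : HasDerivAt (ang k) (deriv (ang k) (r ^ 2)) (r ^ 2) :=
    ((ang_contDiff k).differentiable (by norm_num) _).hasDerivAt
  have h2 : HasDerivAt (fun r : ℝ => r ^ 2) (2 * r) r := by simpa using hasDerivAt_pow 2 r
  exact HasDerivAt.comp (h₂ := ang k) (h := fun r : ℝ => r ^ 2) r h1 h2

lemma gg_radial (k : ℤ) {r : ℝ} (hr : 0 < r) :
    r ^ 2 * gg k (r ^ 2) =
      Real.sin (ang k (r ^ 2)) ^ 2 * (deriv (ang k) (r ^ 2) * (2 * r)) := by
  have ht : 0 < r ^ 2 := by positivity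
  have h1 : HasDerivAt (ang k) (deriv (ang k) (r ^ 2)) (r ^ 2) :=
    ((ang_contDiff k).differentiable (by norm_num) _).hasDerivAt
  have hc : deriv (cc k) (r ^ 2) = - Real.sin (ang k (r ^ 2)) * deriv (ang k) (r ^ 2) :=
    h1.cos.deriv
  have hs : √(r ^ 2) = r := Real.sqrt_sq hr.le
  have hh' : deriv (hh k) (r ^ 2) = _ :=
    (h1.sin.div ((hasDerivAt_id (r ^ 2)).sqrt ht.ne') (Real.sqrt_pos.2 ht).ne').deriv
  unfold gg
  rw [hc, hh']
  simp only [hh, cc, hs, id]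
  generalize deriv (ang k) (r ^ 2) = A
  have := Real.sin_sq_add_cos_sq (ang k (r ^ 2))
  generalize Real.sin (ang k (r ^ 2)) = s at *
  generalize Real.cos (ang k (r ^ 2)) = c at *
  field_simp
  linear_combination (s^2 * r ^ 2 * A * 2) * this

lemma radial_integral (k : ℤ) :
    ∫ r in Set.Ioi (0 : ℝ), r ^ 2 * gg k (r ^ 2) = k * π / 2 := by
  have hd : ∀ r : ℝ, HasDerivAt (fun r => ang k (r ^ 2) / 2 - Real.sin (2 * ang k (r ^ 2)) / 4)
      (Real.sin (ang k (r ^ 2)) ^ 2 * (deriv (ang k) (r ^ 2) * (2 * r))) r := by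
    intro r
    have h := ang_hasDeriv k r
    have := (h.div_const 2).sub ((h.const_mul 2).sin.div_const 4)
    refine this.congr_deriv ?_
    rw [Real.cos_two_mul, Real.cos_sq']
    ring
  have hda : Continuous (deriv (ang k)) := (ang_contDiff k).continuous_deriv (by norm_num)
  have hca : Continuous (ang k) := (ang_contDiff k).continuous
  have hint : Integrable (fun r : ℝ =>
      Real.sin (ang k (r ^ 2)) ^ 2 * (deriv (ang k) (r ^ 2) * (2 * r))) volume := by
    refine Continuous.integrable_of_hasCompactSupport (by fun_prop)
      (HasCompactSupport.intro (isCompact_closedBall (0 : ℝ) 2) fun r hr => ?_)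
    have : 2 ≤ r ^ 2 := by
      rw [mem_closedBall_zero_iff, Real.norm_eq_abs, not_le] at hr
      nlinarith [sq_abs r]
    simp [ang_high k this]
  have hlim : Tendsto (fun r : ℝ => ang k (r ^ 2) / 2 - Real.sin (2 * ang k (r ^ 2)) / 4) atTop
      (𝓝 (k * π / 2)) := by
    refine tendsto_const_nhds.congr' ?_
    filter_upwards [eventually_ge_atTop (2 : ℝ)] with r hr
    have h0 : Real.sin (2 * (k * π)) = 0 := by
      have := Real.sin_int_mul_pi (2 * k)
      push_cast at this
      rw [← this]; ring_nf
    rw [ang_high k (by nlinarith : 2 ≤ r ^ 2), h0]; ring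
  have := integral_Ioi_of_hasDerivAt_of_tendsto' (a := (0 : ℝ)) (fun r _ => hd r) hint.integrableOn hlim
  rw [setIntegral_congr_fun measurableSet_Ioi (fun r hr => gg_radial k hr), this]
  simp [ang_low]

lemma rsq_norm (y : EuclideanSpace ℝ (Fin 3)) : rsq (WithLp.ofLp y) = ‖y‖ ^ 2 := by
  rw [EuclideanSpace.norm_sq_eq]
  simp [rsq, Fin.sum_univ_three]

lemma integral_rsq (f : ℝ → ℝ) :
    ∫ x : R3, f (rsq x) = 4 * π * ∫ r in Set.Ioi (0 : ℝ), r ^ 2 * f (r ^ 2) := by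
  have h1 := (EuclideanSpace.volume_preserving_symm_measurableEquiv_toLp (Fin 3)).integral_comp'
    (fun x : R3 => f (rsq x))
  rw [← h1]
  have h2 : ∀ y : EuclideanSpace ℝ (Fin 3),
      f (rsq ((MeasurableEquiv.toLp 2 (Fin 3 → ℝ)).symm y)) = f (‖y‖ ^ 2) := by
    intro y
    rw [← rsq_norm]; rfl
  simp only [h2]
  rw [integral_fun_norm_addHaar (volume : Measure (EuclideanSpace ℝ (Fin 3))) (fun r => f (r ^ 2))]
  rw [Measure.real, EuclideanSpace.volume_ball_fin_three]
  simp
  rw [ENNReal.toReal_ofReal (by positivity)]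
  ring

lemma hedge_degree (k : ℤ) : degree (hedgeMap k) = -(k : ℝ) := by
  unfold degree
  simp only [hedge_det]
  rw [integral_neg, integral_rsq, radial_integral]
  field_simp
  try ring

/-- 12 |k| π² ≤ I_k. -/
theorem skyrme_lower_bound (k : ℤ) :
    12 * |(k : ℝ)| * π ^ 2 ≤ Skyrme.I k := by
  unfold Skyrme.I
  refine le_csInf ⟨_, hedgeMap (-k), hedge_memX _, ?_, rfl⟩ ?_
  · rw [hedge_degree]; push_cast; ring
  · rintro E ⟨φ, hφ, hk, rfl⟩
    rw [← hk]
    exact energy_bound φ hφ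
end
end

section
/- For every α ∈ (1, 3/2) there exists a constant C > 0 such that for every φ ∈ X with ∫_{ℝ³}(|φ − P|⁶ + |∇φ|²) dx < ∞ and every measurable set D ⊂ ℝ³, ∫_D |φ − P|^{6α} dx ≤ C c^{α−1} ∫_{ℝ³} (|φ − P|⁶ + |∇φ|²) dx, where c = sup_{y ∈ ℝ³} ∫_{B(y,1) ∩ D} (|φ − P|⁶ + |∇φ|²) dx and P = (0,0,0,1) is the north pole of S³. -/
/- Common setting: Skyrme maps φ : ℝ³ → S³ ⊂ ℝ⁴ with weak partial derivatives. -/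

open MeasureTheory Real Filter
open scoped Topology ENNReal BigOperators

noncomputable section

open scoped Convolution
open ContinuousLinearMap (lsmul)

lemma aux_jensen (ρ : R3 → ℝ) (hρ : Continuous ρ) 
    (h1 : ∫⁻ x, ‖ρ x‖ₑ = 1) (h : R3 → ℝ) (hh : AEStronglyMeasurable h volume) (k : ℕ) (hk : 1 ≤ k) :
    ∫⁻ x, ‖(ρ ⋆[lsmul ℝ ℝ, volume] h) x‖ₑ ^ k ≤ ∫⁻ x, ‖h x‖ₑ ^ k := by
  have hk0 : (k : ℝ) ≠ 0 := by positivity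
  have hk1 : (1 : ℝ) ≤ k := by exact_mod_cast hk
  have hmeas : AEMeasurable (fun z : R3 × R3 => ‖ρ z.2‖ₑ * ‖h (z.1 - z.2)‖ₑ ^ k)
      ((volume : Measure R3).prod volume) := by
    refine AEMeasurable.mul (f := fun z : R3 × R3 => ‖ρ z.2‖ₑ) (by fun_prop) (AEMeasurable.pow_const ?_ k)
    have : AEStronglyMeasurable (fun z : R3 × R3 => h (z.1 - z.2))
      ((volume : Measure R3).prod volume) :=
      hh.comp_quasiMeasurePreserving (quasiMeasurePreserving_sub volume volume)
    exact this.enorm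
  have hpt : ∀ x, ‖(ρ ⋆[lsmul ℝ ℝ, volume] h) x‖ₑ ^ k ≤ ∫⁻ t, ‖ρ t‖ₑ * ‖h (x - t)‖ₑ ^ k := by
    intro x
    have hx : AEStronglyMeasurable (fun t => h (x - t)) volume :=
      hh.comp_quasiMeasurePreserving (quasiMeasurePreserving_sub_left volume x)
    have e1 : ‖(ρ ⋆[lsmul ℝ ℝ, volume] h) x‖ₑ ≤ ∫⁻ t, ‖ρ t‖ₑ * ‖h (x - t)‖ₑ := by
      refine (enorm_integral_le_lintegral_enorm _).trans_eq ?_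
      simp [enorm_mul]
    have e2 : ∫⁻ t, ‖ρ t‖ₑ * ‖h (x - t)‖ₑ
        ≤ (∫⁻ t, ‖ρ t‖ₑ * ‖h (x - t)‖ₑ ^ k) ^ (1 / k : ℝ) * (∫⁻ t, ‖ρ t‖ₑ) ^ (1 - 1 / k : ℝ) := by
      refine le_trans (le_of_eq ?_) (ENNReal.lintegral_mul_norm_pow_le (f := fun t => ‖ρ t‖ₑ * ‖h (x - t)‖ₑ ^ k)
        (g := fun t => ‖ρ t‖ₑ) (p := (1 / k : ℝ)) (q := (1 - 1 / k : ℝ)) ?_ ?_ ?_ ?_ ?_)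
      · refine lintegral_congr fun t => ?_
        rw [ENNReal.mul_rpow_of_nonneg _ _ (by positivity), ← ENNReal.rpow_natCast, ← ENNReal.rpow_mul,
          mul_one_div_cancel hk0, ENNReal.rpow_one, mul_right_comm,
          ← ENNReal.rpow_add_of_nonneg]
        · simp
        · positivity
        · rw [sub_nonneg, div_le_one (by positivity)]; exact hk1
      · exact AEMeasurable.mul (by fun_prop) (hx.enorm.pow_const k)
      · fun_prop
      · positivity
      · rw [sub_nonneg, div_le_one (by positivity)]; exact hk1
      · ring
    rw [h1, ENNReal.one_rpow, mul_one] at e2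
    calc _ ≤ ((∫⁻ t, ‖ρ t‖ₑ * ‖h (x - t)‖ₑ ^ k) ^ (1 / k : ℝ)) ^ k := by
            gcongr; exact e1.trans e2
      _ = _ := by
            rw [← ENNReal.rpow_natCast, ← ENNReal.rpow_mul, one_div_mul_cancel hk0, ENNReal.rpow_one]
  calc _ ≤ ∫⁻ x, ∫⁻ t, ‖ρ t‖ₑ * ‖h (x - t)‖ₑ ^ k := lintegral_mono hpt
    _ = ∫⁻ t, ∫⁻ x, ‖ρ t‖ₑ * ‖h (x - t)‖ₑ ^ k := lintegral_lintegral_swap hmeas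
    _ = ∫⁻ t, ‖ρ t‖ₑ * ∫⁻ x, ‖h x‖ₑ ^ k := by
        refine lintegral_congr fun t => ?_
        rw [lintegral_const_mul' _ _ (by simp)]
        congr 1
        exact lintegral_sub_right_eq_self (fun x => ‖h x‖ₑ ^ k) t
    _ = _ := by rw [lintegral_mul_const _ (by fun_prop), h1, one_mul]

lemma aux_bound (ρ : R3 → ℝ) (hρ : Integrable ρ) (h0 : ∀ x, 0 ≤ ρ x)
    (h1 : ∫ x, ρ x = 1) (f : R3 → ℝ) (hf : ∀ᵐ x, |f x| ≤ 2) (x : R3) :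
    |(ρ ⋆[lsmul ℝ ℝ, volume] f) x| ≤ 2 := by
  have := norm_integral_le_of_norm_le (f := fun t => ρ t * f (x - t)) (hρ.mul_const 2) (by
    have h2 : ∀ᵐ t, |f (x - t)| ≤ 2 :=
      (quasiMeasurePreserving_sub_left volume x).ae hf
    filter_upwards [h2] with t ht
    rw [norm_mul, norm_of_nonneg (h0 t)]
    exact mul_le_mul_of_nonneg_left ht (h0 t))
  rw [integral_mul_const, h1, one_mul] at this
  simpa [convolution_def] using this

lemma aux_deriv (ρ : R3 → ℝ) (hρ : ContDiff ℝ (⊤ : ℕ∞) ρ) (hc : HasCompactSupport ρ)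
    (f g : R3 → ℝ) (hf : LocallyIntegrable f volume) (i : Fin 3)
    (hw : ∀ ψ : R3 → ℝ, IsTestFun ψ →
      ∫ x : R3, fderiv ℝ ψ x (Pi.single i 1) * f x = - ∫ x : R3, ψ x * g x) (x : R3) :
    fderiv ℝ (ρ ⋆[lsmul ℝ ℝ, volume] f) x (Pi.single i 1) = (ρ ⋆[lsmul ℝ ℝ, volume] g) x := by
  have hρ1 : ContDiff ℝ 1 ρ := hρ.of_le (by exact_mod_cast le_top)
  have hd := hc.hasFDerivAt_convolution_left (lsmul ℝ ℝ) hρ1 hf x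
  rw [hd.fderiv]
  have hex : ConvolutionExistsAt (fderiv ℝ ρ) f x ((lsmul ℝ ℝ).precompL R3) volume :=
    ((hc.fderiv ℝ).convolutionExists_left _ (hρ1.continuous_fderiv one_ne_zero) hf) x
  rw [convolution_def, ContinuousLinearMap.integral_apply hex]
  rw [convolution_eq_swap]
  have := hw (fun t => ρ (x - t)) ⟨by fun_prop, hc.comp_homeomorph (Homeomorph.subLeft x)⟩
  rw [← neg_eq_iff_eq_neg, ← integral_neg] at this
  simp only [ContinuousLinearMap.lsmul_apply, smul_eq_mul]
  rw [← this, ← integral_sub_left_eq_self _ volume x]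
  refine integral_congr_ae (Eventually.of_forall fun t => ?_)
  have h3 : fderiv ℝ (fun t => ρ (x - t)) t = - fderiv ℝ ρ (x - t) := by
    have hh := ((hρ1.differentiable one_ne_zero) (x - t)).hasFDerivAt.comp t
      ((hasFDerivAt_id t).const_sub x)
    refine hh.fderiv.trans ?_
    ext v; simp
  simp [h3]

/-- The local density attached to a scalar function. -/
def gdens (F : R3 → ℝ) (x : R3) : ℝ≥0∞ :=
  ‖F x‖ₑ ^ 6 + ∑ i : Fin 3, ‖fderiv ℝ F x (Pi.single i 1)‖ₑ ^ 2

lemma aux_opnorm (L : R3 →L[ℝ] ℝ) : ‖L‖ ≤ ∑ i : Fin 3, |L (Pi.single i 1)| := by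
  refine L.opNorm_le_bound (Finset.sum_nonneg fun i _ => abs_nonneg _) fun x => ?_
  have hx : x = ∑ i : Fin 3, x i • (Pi.single i 1 : R3) := by
    ext j; simp [Finset.sum_apply, Pi.single_apply]
  have hL : L x = ∑ i : Fin 3, x i * L (Pi.single i 1) := by
    conv_lhs => rw [hx]
    simp
  rw [hL, Finset.sum_mul]
  refine (norm_sum_le _ _).trans (Finset.sum_le_sum fun i _ => ?_)
  rw [norm_mul, mul_comm]
  exact mul_le_mul_of_nonneg_left (norm_le_pi_norm x i) (abs_nonneg _)

lemma aux_fderiv_bound (η : R3 → ℝ) (hη : ContDiff ℝ 1 η) (h1 : ∀ x, |η x| ≤ 1) (M : ℝ)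
    (hM : ∀ x, ‖fderiv ℝ η x‖ ≤ M) (F : R3 → ℝ) (hF : ContDiff ℝ 1 F) (hF2 : ∀ x, |F x| ≤ 2) (x : R3) :
    ‖fderiv ℝ (fun x => η x * F x ^ 3) x‖ₑ ^ 2 ≤ ENNReal.ofReal (4 * (M ^ 2 + 144)) * gdens F x := by
  have hdF : DifferentiableAt ℝ F x := (hF.differentiable one_ne_zero) x
  have hdη : DifferentiableAt ℝ η x := (hη.differentiable one_ne_zero) x
  have hd := (hdη.hasFDerivAt.mul (hdF.hasFDerivAt.pow 3)).fderiv
  have hM0 : 0 ≤ M := (norm_nonneg _).trans (hM x)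
  have e : ‖fderiv ℝ (fun x => η x * F x ^ 3) x‖ ≤ M * |F x| ^ 3
      + 12 * ∑ i : Fin 3, |fderiv ℝ F x (Pi.single i 1)| := by
    have hd' : fderiv ℝ (fun x => η x * F x ^ 3) x
      = η x • ((3 * F x ^ 2) • fderiv ℝ F x) + F x ^ 3 • fderiv ℝ η x := by
      refine Eq.trans hd ?_
      simp
    rw [hd']
    refine (norm_add_le _ _).trans ?_
    rw [norm_smul, norm_smul, norm_smul, add_comm]
    have hF4 : ‖3 * F x ^ 2‖ ≤ 12 := by
      rw [norm_mul, norm_pow, Real.norm_eq_abs, Real.norm_eq_abs]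
      have := hF2 x
      have h0 := abs_nonneg (F x)
      rw [abs_of_pos (by norm_num : (0:ℝ) < 3)]
      nlinarith
    refine add_le_add ?_ ?_
    · rw [norm_pow, mul_comm]
      exact mul_le_mul_of_nonneg_right (hM x) (by positivity)
    · calc ‖η x‖ * (‖3 * F x ^ 2‖ * ‖fderiv ℝ F x‖) ≤ 1 * (12 * ∑ i : Fin 3, |fderiv ℝ F x (Pi.single i 1)|) := by
            gcongr
            · exact h1 x
            · exact aux_opnorm _
        _ = _ := one_mul _
  have e2 : ‖fderiv ℝ (fun x => η x * F x ^ 3) x‖ ^ 2 ≤ 4 * (M ^ 2 + 144) *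
      (‖F x‖ ^ 6 + ∑ i : Fin 3, ‖fderiv ℝ F x (Pi.single i 1)‖ ^ 2) := by
    refine (pow_le_pow_left₀ (norm_nonneg _) e 2).trans ?_
    simp only [Fin.sum_univ_three, Real.norm_eq_abs]
    have hp : |F x| ^ 6 = (|F x| ^ 3) ^ 2 := by ring
    rw [hp]
    generalize |F x| ^ 3 = a
    generalize |fderiv ℝ F x (Pi.single 0 1)| = b
    generalize |fderiv ℝ F x (Pi.single 1 1)| = c
    generalize |fderiv ℝ F x (Pi.single 2 1)| = d
    nlinarith [sq_nonneg (M * a - 12 * b), sq_nonneg (M * a - 12 * c), sq_nonneg (M * a - 12 * d),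
      sq_nonneg (b - c), sq_nonneg (b - d), sq_nonneg (c - d), sq_nonneg (M * b), sq_nonneg (M * c),
      sq_nonneg (M * d), sq_nonneg a]
  have e3 := ENNReal.ofReal_le_ofReal e2
  rw [ENNReal.ofReal_mul (by positivity), ENNReal.ofReal_add (by positivity) (by positivity),
    ENNReal.ofReal_sum_of_nonneg (fun i _ => by positivity)] at e3
  simp only [ENNReal.ofReal_pow (norm_nonneg _), ofReal_norm] at e3
  exact e3

lemma aux_sob (η : R3 → ℝ) (hη : ContDiff ℝ 1 η) (h1 : ∀ x, |η x| ≤ 1) (hc : HasCompactSupport η)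
    (p : NNReal) (hp : 1 ≤ p) (hp6 : p ≤ 6) :
    ∃ C : NNReal, ∀ F : R3 → ℝ, ContDiff ℝ 1 F → (∀ x, |F x| ≤ 2) →
      (∫⁻ x, ‖η x * F x ^ 3‖ₑ ^ (p : ℝ)) ^ (2 / p : ℝ) ≤ C * ∫⁻ x in tsupport η, gdens F x := by
  obtain ⟨M, hM⟩ : ∃ M, ∀ x, ‖fderiv ℝ η x‖ ≤ M :=
    (hη.continuous_fderiv one_ne_zero).bounded_above_of_compact_support (hc.fderiv ℝ)
  refine ⟨(eLpNormLESNormFDerivOfLeConst ℝ (volume : Measure R3) (tsupport η) 2 p) ^ 2 *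
    (4 * (M ^ 2 + 144)).toNNReal, fun F hF hF2 => ?_⟩
  have hp0 : (0 : ℝ) < p := by exact_mod_cast (zero_lt_one.trans_le hp)
  have hs := eLpNorm_le_eLpNorm_fderiv_of_le (volume : Measure R3) (u := fun x => η x * F x ^ 3)
    (s := tsupport η) (p := 2) (q := p) (by fun_prop)
    (fun x hx => subset_tsupport _ (by
      intro h0; apply hx; simp [h0])) one_le_two (by simp; norm_num) (by
        simp only [Module.finrank_fintype_fun_eq_card, Fintype.card_fin]
        have : (p : ℝ) ≤ 6 := by exact_mod_cast hp6
        have := inv_anti₀ hp0 this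
        norm_num at this ⊢
        linarith) hc.isCompact.isBounded
  have hs2 := pow_le_pow_left' hs 2
  rw [mul_pow, eLpNorm_nnreal_eq_lintegral (by exact_mod_cast hp0.ne'), ← ENNReal.rpow_natCast, ← ENNReal.rpow_mul,
    eLpNorm_nnreal_eq_lintegral two_ne_zero] at hs2
  have e1 : (1 / p * (2 : ℕ) : ℝ) = 2 / p := by push_cast; ring
  rw [e1] at hs2
  refine hs2.trans ?_
  rw [← ENNReal.rpow_natCast _ 2, ← ENNReal.rpow_natCast _ 2, ← ENNReal.rpow_mul]
  have e2 : ((1 / ((2 : NNReal) : ℝ)) * (2 : ℕ) : ℝ) = 1 := by norm_num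
  rw [e2, ENNReal.rpow_one, ENNReal.coe_mul, mul_assoc, ENNReal.rpow_natCast, ENNReal.coe_pow]
  gcongr
  have hsub : Function.support (fun x => ‖fderiv ℝ (fun x => η x * F x ^ 3) x‖ₑ ^ ((2 : NNReal) : ℝ)) ⊆ tsupport η := by
    intro x hx
    have : x ∈ Function.support (fderiv ℝ (fun x => η x * F x ^ 3)) := by
      intro h0; apply hx; simp only [← ofReal_norm, h0]; simp
    exact tsupport_mul_subset_left (support_fderiv_subset ℝ this)
  rw [← setLIntegral_eq_of_support_subset hsub, ← lintegral_const_mul' _ _ (by simp)]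
  refine lintegral_mono fun x => ?_
  have := aux_fderiv_bound η hη h1 M hM F hF hF2 x
  have h2 : ((2 : NNReal) : ℝ) = ((2 : ℕ) : ℝ) := by norm_num
  rw [h2, ENNReal.rpow_natCast]
  exact this

lemma gdens_meas (F : R3 → ℝ) (hF : ContDiff ℝ 1 F) : Measurable (gdens F) := by
  have hc := hF.continuous_fderiv one_ne_zero
  have hF' := hF.continuous
  unfold gdens
  refine Measurable.add (hF'.measurable.enorm.pow_const 6) (Finset.measurable_sum _ fun i _ => ?_)
  have : Continuous fun x => fderiv ℝ F x (Pi.single i 1) := by fun_prop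
  exact (this.measurable.enorm).pow_const 2

lemma gdens_translate (F : R3 → ℝ) (y x : R3) : gdens (fun z => F (z + y)) x = gdens F (x + y) := by
  simp only [gdens, fderiv_comp_add_right]

lemma eball_meas (y : R3) (r : ℝ) : MeasurableSet (eball y r) := by
  unfold eball
  exact measurableSet_lt (by fun_prop) (by fun_prop)

lemma aux_smooth (α : ℝ) (hα : 1 < α) (hα' : α < 3 / 2) :
    ∃ C : NNReal, ∀ F : R3 → ℝ, ContDiff ℝ 1 F → (∀ x, |F x| ≤ 2) → ∀ W : R3 → ℝ≥0∞, Measurable W →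
      ∀ K : ℝ≥0∞, (∀ y, ∫⁻ x in eball y 1, W x ≤ K) →
      ∫⁻ x, W x ^ (α - 1) * ‖F x‖ₑ ^ 6 ≤ C * K ^ (α - 1) * ∫⁻ x, gdens F x := by
  let b : ContDiffBump (0 : R3) := ⟨1 / 4, 1 / 2, by norm_num, by norm_num⟩
  have hbc : Continuous b := b.continuous
  have hb1 : ∀ x, |b x| ≤ 1 := fun x => by rw [abs_of_nonneg b.nonneg]; exact b.le_one
  have h2α : 0 < 2 - α := by linarith
  obtain ⟨p, hpdef⟩ : ∃ p : NNReal, (p : ℝ) = 2 / (2 - α) := ⟨⟨2 / (2 - α), by positivity⟩, rfl⟩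
  have hp1 : 1 ≤ p := by
    rw [← NNReal.coe_le_coe, hpdef, le_div_iff₀ h2α]; push_cast; linarith
  have hp6 : p ≤ 6 := by
    rw [← NNReal.coe_le_coe, hpdef, div_le_iff₀ h2α]; push_cast; linarith
  obtain ⟨C, hC⟩ := aux_sob b b.contDiff hb1 b.hasCompactSupport p hp1 hp6
  have hp2 : (2 / p : ℝ) = 2 - α := by rw [hpdef]; field_simp
  have hp3 : (p : ℝ) * (2 - α) = (2 : ℕ) := by rw [hpdef]; field_simp; norm_num
  set κ : ℝ≥0∞ := ∫⁻ x, ‖b x‖ₑ ^ 2 with hκ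
  set V : ℝ≥0∞ := volume (tsupport b) with hV
  have hVtop : V ≠ ⊤ := b.hasCompactSupport.isCompact.measure_lt_top.ne
  have hκ0 : κ ≠ 0 := by
    intro h0
    rw [hκ, lintegral_eq_zero_iff (by fun_prop)] at h0
    have h3 : ∀ᵐ x : R3, b x = 0 := by
      filter_upwards [h0] with x hx
      simpa using hx
    have := b.integral_pos (μ := volume)
    rw [integral_congr_ae h3] at this
    simp at this
  have hκtop : κ ≠ ⊤ := by
    refine ne_top_of_le_ne_top hVtop ?_
    have hsub : Function.support (fun x => ‖b x‖ₑ ^ 2) ⊆ tsupport b := by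
      intro x hx
      refine subset_tsupport _ ?_
      intro h0; apply hx; simp [h0]
    rw [hκ, ← setLIntegral_eq_of_support_subset hsub]
    refine (lintegral_mono (g := fun _ => 1) fun x => ?_).trans (by simp [hV])
    refine pow_le_one' ?_ 2
    rw [← ofReal_norm, ← ENNReal.ofReal_one]
    exact ENNReal.ofReal_le_ofReal (hb1 x)
  refine ⟨(κ⁻¹ * C * V).toNNReal, fun F hF hF2 W hW K hK => ?_⟩
  have hFc := hF.continuous
  have hG := gdens_meas F hF
  rw [ENNReal.coe_toNNReal (by finiteness)]
  -- the estimate at a fixed centre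
  have key : ∀ y, ∫⁻ x, ‖b x‖ₑ ^ 2 * (W (x + y) ^ (α - 1) * ‖F (x + y)‖ₑ ^ 6)
      ≤ K ^ (α - 1) * (C * ∫⁻ x in tsupport b, gdens F (x + y)) := by
    intro y
    have hFy : ContDiff ℝ 1 (fun x => F (x + y)) := by fun_prop
    have hs := hC (fun x => F (x + y)) hFy (fun x => hF2 _)
    simp only [gdens_translate] at hs
    rw [hp2] at hs
    have hWK : ∫⁻ x, (eball y 1).indicator W (x + y) ≤ K := by
      rw [lintegral_add_right_eq_self (fun x => (eball y 1).indicator W x) y,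
        lintegral_indicator (eball_meas y 1)]
      exact hK y
    have hWm : Measurable ((eball y 1).indicator W) := hW.indicator (eball_meas y 1)
    calc _ = ∫⁻ x, ((eball y 1).indicator W (x + y)) ^ (α - 1)
              * (‖b x * F (x + y) ^ 3‖ₑ ^ (p : ℝ)) ^ (2 - α) := by
            refine lintegral_congr fun x => ?_
            rw [← ENNReal.rpow_mul, hp3, ENNReal.rpow_natCast]
            by_cases hx : b x = 0
            · simp [hx]
            · have hx' : x ∈ Metric.ball (0 : R3) (1 / 2) := by
                have : x ∈ Function.support b := hx
                rwa [b.support_eq] at this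
              have hmem : x + y ∈ eball y 1 := by
                rw [mem_ball_zero_iff, pi_norm_lt_iff (by norm_num)] at hx'
                simp only [eball, Set.mem_ofPred_eq, Pi.add_apply, add_sub_cancel_right,
                  Fin.sum_univ_three]
                have h0 := abs_lt.1 (hx' 0)
                have h1 := abs_lt.1 (hx' 1)
                have h2 := abs_lt.1 (hx' 2)
                nlinarith
              rw [Set.indicator_of_mem hmem, enorm_mul, enorm_pow]
              ring
      _ ≤ (∫⁻ x, (eball y 1).indicator W (x + y)) ^ (α - 1)
            * (∫⁻ x, ‖b x * F (x + y) ^ 3‖ₑ ^ (p : ℝ)) ^ (2 - α) := by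
            refine ENNReal.lintegral_mul_norm_pow_le ?_ ?_ (by linarith) (by linarith) (by ring)
            · exact (hWm.comp (measurable_add_const y)).aemeasurable
            · fun_prop
      _ ≤ _ := by
            gcongr
  have hJ := lintegral_mono (μ := (volume : Measure R3)) key
  have hL : ∫⁻ y, ∫⁻ x, ‖b x‖ₑ ^ 2 * (W (x + y) ^ (α - 1) * ‖F (x + y)‖ₑ ^ 6)
      = κ * ∫⁻ x, W x ^ (α - 1) * ‖F x‖ₑ ^ 6 := by
    rw [lintegral_lintegral_swap (by fun_prop)]
    rw [hκ, ← lintegral_mul_const _ (by fun_prop)]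
    refine lintegral_congr fun x => ?_
    rw [lintegral_const_mul' _ _ (by finiteness),
      lintegral_add_left_eq_self (fun z => W z ^ (α - 1) * ‖F z‖ₑ ^ 6) x]
  have hR : ∫⁻ y, K ^ (α - 1) * (C * ∫⁻ x in tsupport b, gdens F (x + y))
      = K ^ (α - 1) * (C * (V * ∫⁻ x, gdens F x)) := by
    have hm : Measurable (fun z : R3 × R3 => gdens F (z.2 + z.1)) :=
      hG.comp (measurable_snd.add measurable_fst)
    have hm2 : Measurable fun y => ∫⁻ x in tsupport b, gdens F (x + y) :=
      hm.lintegral_prod_right'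
    rw [lintegral_const_mul _ (by fun_prop), lintegral_const_mul _ hm2,
      lintegral_lintegral_swap hm.aemeasurable]
    congr 2
    have : ∀ x, ∫⁻ y, gdens F (x + y) = ∫⁻ y, gdens F y := fun x =>
      lintegral_add_left_eq_self (gdens F) x
    simp only [this]
    rw [setLIntegral_const, mul_comm]
  rw [hL, hR] at hJ
  calc _ = κ⁻¹ * (κ * ∫⁻ x, W x ^ (α - 1) * ‖F x‖ₑ ^ 6) := by
        rw [← mul_assoc, ENNReal.inv_mul_cancel hκ0 hκtop, one_mul]
    _ ≤ κ⁻¹ * (K ^ (α - 1) * (C * (V * ∫⁻ x, gdens F x))) := by gcongr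
    _ = _ := by ring

lemma aux_scalar (α : ℝ) (hα : 1 < α) (hα' : α < 3 / 2) :
    ∃ C : NNReal, ∀ (f : R3 → ℝ) (g : Fin 3 → R3 → ℝ), Measurable f → (∀ᵐ x, |f x| ≤ 2) →
      (∀ i, LocallyIntegrable (g i) volume) →
      (∀ (i : Fin 3) (ψ : R3 → ℝ), IsTestFun ψ →
        ∫ x : R3, fderiv ℝ ψ x (Pi.single i 1) * f x = - ∫ x : R3, ψ x * g i x) →
      ∀ D : Set R3, MeasurableSet D → ∀ K : ℝ≥0∞, (∀ y, ∫⁻ x in eball y 1 ∩ D, ‖f x‖ₑ ^ 6 ≤ K) →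
      ∫⁻ x in D, ‖f x‖ₑ ^ (6 * α) ≤
        C * K ^ (α - 1) * ((∫⁻ x, ‖f x‖ₑ ^ 6) + ∑ i, ∫⁻ x, ‖g i x‖ₑ ^ 2) := by
  obtain ⟨C, hC⟩ := aux_smooth α hα hα'
  refine ⟨C, fun f g hfm hf2 hg hw D hD K hK => ?_⟩
  have hfloc : LocallyIntegrable f volume := by
    refine (locallyIntegrable_const (2 : ℝ)).mono hfm.aestronglyMeasurable ?_
    filter_upwards [hf2] with x hx
    simpa using hx
  let b : ℕ → ContDiffBump (0 : R3) := fun n =>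
    ⟨1 / (n + 1), 2 / (n + 1), by positivity, by gcongr; norm_num⟩
  let F : ℕ → R3 → ℝ := fun n => ((b n).normed volume) ⋆[lsmul ℝ ℝ, volume] f
  have hlim : ∀ᵐ x, Tendsto (fun n => F n x) atTop (𝓝 (f x)) := by
    refine ContDiffBump.ae_convolution_tendsto_right_of_locallyIntegrable (K := 2) ?_ ?_ hfloc
    · have := (tendsto_one_div_add_atTop_nhds_zero_nat (𝕜 := ℝ)).const_mul 2
      rw [mul_zero] at this
      refine this.congr fun n => ?_
      show _ = 2 / ((n : ℝ) + 1)
      ring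
    · refine Eventually.of_forall fun n => ?_
      show 2 / ((n : ℝ) + 1) ≤ 2 * (1 / ((n : ℝ) + 1))
      exact le_of_eq (by ring)
  have hone : ∀ n, ∫⁻ x, ‖(b n).normed volume x‖ₑ = 1 := fun n => by
    have h1 := (b n).integral_normed (μ := volume)
    have h2 := ofReal_integral_eq_lintegral_ofReal (b n).integrable_normed
      (Eventually.of_forall fun x => (b n).nonneg_normed (μ := volume) x)
    rw [h1, ENNReal.ofReal_one] at h2
    rw [h2]
    refine lintegral_congr fun x => ?_
    exact Real.enorm_of_nonneg ((b n).nonneg_normed x)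
  have hcont : ∀ n, Continuous ((b n).normed volume) := fun n => (b n).continuous_normed
  have hFs : ∀ n, ContDiff ℝ 1 (F n) := fun n =>
    (b n).hasCompactSupport_normed.contDiff_convolution_left (n := 1) _ (b n).contDiff_normed hfloc
  have hFb : ∀ n x, |F n x| ≤ 2 := fun n x =>
    aux_bound _ (b n).integrable_normed (fun x => (b n).nonneg_normed x) (b n).integral_normed f hf2 x
  set E : ℝ≥0∞ := (∫⁻ x, ‖f x‖ₑ ^ 6) + ∑ i, ∫⁻ x, ‖g i x‖ₑ ^ 2 with hE
  have hFd : ∀ n, ∫⁻ x, gdens (F n) x ≤ E := fun n => by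
    have hd : ∀ i x, fderiv ℝ (F n) x (Pi.single i 1)
        = (((b n).normed volume) ⋆[lsmul ℝ ℝ, volume] g i) x := fun i x =>
      aux_deriv _ (b n).contDiff_normed (b n).hasCompactSupport_normed f (g i) hfloc i (hw i) x
    unfold gdens
    rw [lintegral_add_left ((hFs n).continuous.measurable.enorm.pow_const 6),
      lintegral_finsetSum]
    · rw [hE]
      refine add_le_add (aux_jensen _ (hcont n) (hone n) f hfm.aestronglyMeasurable 6 (by norm_num))
        (Finset.sum_le_sum fun i _ => ?_)
      simp only [hd]
      exact aux_jensen _ (hcont n) (hone n) (g i) (hg i).aestronglyMeasurable 2 (by norm_num)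
    · intro i _
      have hc := (hFs n).continuous_fderiv one_ne_zero
      have : Continuous fun x => fderiv ℝ (F n) x (Pi.single i 1) := by fun_prop
      exact (this.measurable.enorm).pow_const 2
  let W : R3 → ℝ≥0∞ := D.indicator fun x => ‖f x‖ₑ ^ 6
  have hWm : Measurable W := (hfm.enorm.pow_const 6).indicator hD
  have hWK : ∀ y, ∫⁻ x in eball y 1, W x ≤ K := fun y => by
    refine le_trans (le_of_eq ?_) (hK y)
    rw [setLIntegral_indicator hD, Set.inter_comm]
  have hn : ∀ n, ∫⁻ x, W x ^ (α - 1) * ‖F n x‖ₑ ^ 6 ≤ C * K ^ (α - 1) * E := fun n =>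
    (hC (F n) (hFs n) (hFb n) W hWm K hWK).trans (by gcongr; exact hFd n)
  have hWtop : ∀ x, W x ^ (α - 1) ≠ ⊤ := fun x => by
    refine ENNReal.rpow_ne_top_of_nonneg (by linarith) ?_
    by_cases hx : x ∈ D
    · simp [W, hx]
    · simp [W, hx]
  calc ∫⁻ x in D, ‖f x‖ₑ ^ (6 * α) = ∫⁻ x, W x ^ (α - 1) * ‖f x‖ₑ ^ 6 := by
        rw [← lintegral_indicator hD]
        refine lintegral_congr fun x => ?_
        by_cases hx : x ∈ D
        · simp only [W, Set.indicator_of_mem hx]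
          rw [← ENNReal.rpow_natCast, ← ENNReal.rpow_mul, ← ENNReal.rpow_add_of_nonneg]
          · congr 1; push_cast; ring
          · push_cast; nlinarith
          · positivity
        · simp only [W, Set.indicator_of_notMem hx]
          rw [ENNReal.zero_rpow_of_pos (by linarith), zero_mul]
    _ = ∫⁻ x, liminf (fun n => W x ^ (α - 1) * ‖F n x‖ₑ ^ 6) atTop := by
        refine lintegral_congr_ae ?_
        filter_upwards [hlim] with x hx
        refine (Tendsto.liminf_eq ?_).symm
        refine ENNReal.Tendsto.const_mul ?_ (Or.inr (hWtop x))
        exact ((ENNReal.continuous_pow 6).tendsto _).comp ((continuous_enorm.tendsto _).comp hx)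
    _ ≤ liminf (fun n => ∫⁻ x, W x ^ (α - 1) * ‖F n x‖ₑ ^ 6) atTop :=
        lintegral_liminf_le fun n => (hWm.pow_const _).mul
          ((hFs n).continuous.measurable.enorm.pow_const 6)
    _ ≤ liminf (fun _ : ℕ => C * K ^ (α - 1) * E) atTop := liminf_le_liminf (Eventually.of_forall hn)
    _ = _ := by simp

lemma dot_self_nonneg' (u : R4) : 0 ≤ nsq u := by
  unfold nsq dot
  exact Finset.sum_nonneg fun a _ => mul_self_nonneg (u a)

lemma sq_le_nsq (u : R4) (a : Fin 4) : u a ^ 2 ≤ nsq u := by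
  rw [pow_two]
  exact Finset.single_le_sum (f := fun a => u a * u a) (fun a _ => mul_self_nonneg (u a))
    (Finset.mem_univ a)

lemma gradSq_nonneg' (φ : SkyrmeMap) (x : R3) : 0 ≤ gradSq φ x :=
  Finset.sum_nonneg fun _ _ => dot_self_nonneg' _

lemma enorm_pow_eq (r : ℝ) (k : ℕ) : ‖r‖ₑ ^ k = ENNReal.ofReal (|r| ^ k) := by
  rw [ENNReal.ofReal_pow (abs_nonneg r), ← Real.norm_eq_abs, ofReal_norm]

/-- global estimate obtained by summing the local ones over a covering. -/
theorem skyrme_global_sobolev (α : ℝ) (hα : 1 < α) (hα' : α < 3 / 2) :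
    ∃ C : ℝ, 0 < C ∧ ∀ (φ : SkyrmeMap), memX φ →
      Integrable (fun x => (nsq (φ.toFun x - northPole)) ^ 3 + gradSq φ x) volume →
      ∀ D : Set R3, MeasurableSet D →
        ∫ x in D, (nsq (φ.toFun x - northPole)) ^ (3 * α)
          ≤ C * (⨆ y : R3, ∫ x in eball y 1 ∩ D,
                ((nsq (φ.toFun x - northPole)) ^ 3 + gradSq φ x)) ^ (α - 1)
              * ∫ x, ((nsq (φ.toFun x - northPole)) ^ 3 + gradSq φ x) := by
  obtain ⟨C, hC⟩ := aux_scalar α hα hα'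
  refine ⟨(4 : ℝ) ^ (3 * α - 1) * (4 * (4 * (C + 1))), by positivity, fun φ _ hI D hD => ?_⟩
  set e : R3 → ℝ := fun x => (nsq (φ.toFun x - northPole)) ^ 3 + gradSq φ x with he
  have he0 : ∀ x, 0 ≤ e x := fun x =>
    add_nonneg (pow_nonneg (dot_self_nonneg' _) 3) (gradSq_nonneg' φ x)
  set c : ℝ := ⨆ y : R3, ∫ x in eball y 1 ∩ D, e x with hc
  have hcy : ∀ y, ∫ x in eball y 1 ∩ D, e x ≤ c := fun y => by
    refine le_ciSup (f := fun y => ∫ x in eball y 1 ∩ D, e x) ⟨∫ x, e x, ?_⟩ y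
    rintro _ ⟨z, rfl⟩
    exact setIntegral_le_integral hI (Eventually.of_forall he0)
  have hc0 : 0 ≤ c := (setIntegral_nonneg ((eball_meas 0 1).inter hD) fun x _ => he0 x).trans (hcy 0)
  have hlt : ∫⁻ x, ENNReal.ofReal (e x) = ENNReal.ofReal (∫ x, e x) :=
    (ofReal_integral_eq_lintegral_ofReal hI (Eventually.of_forall he0)).symm
  have hT0 : 0 ≤ ∫ x, e x := integral_nonneg he0
  set u : R3 → R4 := fun x => φ.toFun x - northPole with hu
  have hum : ∀ a, Measurable fun x => u x a := fun a =>
    ((measurable_pi_apply a).comp φ.meas).sub measurable_const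
  have hcomp : ∀ a : Fin 4, ∫⁻ x in D, ‖u x a‖ₑ ^ (6 * α) ≤
      ENNReal.ofReal (4 * (C + 1) * c ^ (α - 1) * ∫ x, e x) := by
    intro a
    have h6 : ∀ x, ‖u x a‖ₑ ^ 6 ≤ ENNReal.ofReal (e x) := fun x => by
      rw [enorm_pow_eq]
      refine ENNReal.ofReal_le_ofReal ?_
      have h1 : |u x a| ^ 6 = (u x a ^ 2) ^ 3 := by rw [← sq_abs]; ring
      rw [h1]
      have h2 := pow_le_pow_left₀ (sq_nonneg _) (sq_le_nsq (u x) a) 3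
      exact h2.trans (le_add_of_nonneg_right (gradSq_nonneg' φ x))
    have hg2 : ∀ i x, ‖φ.pderiv i x a‖ₑ ^ 2 ≤ ENNReal.ofReal (e x) := fun i x => by
      rw [enorm_pow_eq]
      refine ENNReal.ofReal_le_ofReal ?_
      rw [sq_abs]
      have h2 : nsq (φ.pderiv i x) ≤ gradSq φ x :=
        Finset.single_le_sum (f := fun i => nsq (φ.pderiv i x)) (fun i _ => dot_self_nonneg' _)
          (Finset.mem_univ i)
      exact ((sq_le_nsq _ a).trans h2).trans
        (le_add_of_nonneg_left (pow_nonneg (dot_self_nonneg' _) 3))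
    have hgl : ∀ i, LocallyIntegrable (fun x => φ.pderiv i x a) volume := fun i => by
      intro x
      obtain ⟨s, hs, hsi⟩ := φ.pderiv_locInt i x
      exact ⟨s, hs, (ContinuousLinearMap.proj (R := ℝ) (φ := fun _ : Fin 4 => ℝ) a).integrable_comp hsi⟩
    have hb : ∀ᵐ x, |φ.toFun x a| ≤ 1 := by
      filter_upwards [φ.sphere] with x hx
      have := sq_le_nsq (φ.toFun x) a
      rw [hx] at this
      exact (sq_le_one_iff_abs_le_one _).1 this
    have hP : |northPole a| ≤ 1 := by
      fin_cases a <;> simp [northPole]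
    have h := hC (fun x => u x a) (fun i x => φ.pderiv i x a) (hum a) ?_ hgl ?_ D hD (ENNReal.ofReal c) ?_
    · refine h.trans ?_
      have hs : (∫⁻ x, ‖u x a‖ₑ ^ 6) + ∑ i, ∫⁻ x, ‖φ.pderiv i x a‖ₑ ^ 2 ≤
          ENNReal.ofReal (4 * ∫ x, e x) := by
        rw [ENNReal.ofReal_mul (by norm_num), ← hlt, Fin.sum_univ_three]
        have h0 := lintegral_mono (μ := (volume : Measure R3)) h6
        have h1 := lintegral_mono (μ := (volume : Measure R3)) (hg2 0)
        have h2 := lintegral_mono (μ := (volume : Measure R3)) (hg2 1)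
        have h3 := lintegral_mono (μ := (volume : Measure R3)) (hg2 2)
        refine (add_le_add h0 (add_le_add (add_le_add h1 h2) h3)).trans (le_of_eq ?_)
        rw [ENNReal.ofReal_ofNat]
        ring
      have hCC : (C : ℝ≥0∞) ≤ ENNReal.ofReal (C + 1) := by
        rw [← ENNReal.ofReal_coe_nnreal]
        exact ENNReal.ofReal_le_ofReal (by linarith)
      calc _ ≤ ENNReal.ofReal (C + 1) * ENNReal.ofReal c ^ (α - 1) * ENNReal.ofReal (4 * ∫ x, e x) := by
            gcongr
        _ = _ := by
            rw [ENNReal.ofReal_rpow_of_nonneg hc0 (by linarith), ← ENNReal.ofReal_mul (by positivity),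
              ← ENNReal.ofReal_mul (by positivity)]
            congr 1; ring
    · filter_upwards [hb] with x hx
      refine (abs_sub _ _).trans ?_
      linarith
    · intro i ψ hψ
      have hψ1 : ContDiff ℝ 1 ψ := hψ.1.of_le (by exact_mod_cast le_top)
      have hdc : Continuous fun x => fderiv ℝ ψ x (Pi.single i 1) := by
        have := hψ1.continuous_fderiv one_ne_zero
        fun_prop
      have hds : HasCompactSupport fun x => fderiv ℝ ψ x (Pi.single i 1) :=
        hψ.2.fderiv_apply ℝ _
      have hdi : Integrable fun x => fderiv ℝ ψ x (Pi.single i 1) :=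
        hdc.integrable_of_hasCompactSupport hds
      have hz : ∫ x, fderiv ℝ ψ x (Pi.single i 1) = 0 := by
        have hψi : Integrable ψ := hψ1.continuous.integrable_of_hasCompactSupport hψ.2
        have := integral_mul_fderiv_eq_neg_fderiv_mul_of_integrable (μ := (volume : Measure R3))
          (f := fun _ : R3 => (1 : ℝ)) (g := ψ) (v := Pi.single i 1)
          (by simp) (by simpa using hdi) (by simpa using hψi) (by fun_prop)
          (fun x _ => hψ1.differentiable one_ne_zero x)
        simpa using this
      have hi1 : Integrable fun x => fderiv ℝ ψ x (Pi.single i 1) * φ.toFun x a := by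
        refine hdi.mul_bdd (c := 1) ((measurable_pi_apply a).comp φ.meas).aestronglyMeasurable ?_
        filter_upwards [hb] with x hx
        exact hx
      rw [← φ.weak i a ψ hψ]
      simp only [hu, Pi.sub_apply, mul_sub]
      rw [integral_sub hi1 (hdi.mul_const _), integral_mul_const, hz, zero_mul, sub_zero]
    · intro y
      refine (lintegral_mono (fun x => h6 x)).trans ?_
      rw [← ofReal_integral_eq_lintegral_ofReal hI.integrableOn (Eventually.of_forall he0)]
      exact ENNReal.ofReal_le_ofReal (hcy y)
  have hnm : Measurable fun x => nsq (u x) := by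
    unfold nsq dot
    exact Finset.measurable_sum _ fun a _ => (hum a).mul (hum a)
  rw [integral_eq_lintegral_of_nonneg_ae
    (Eventually.of_forall fun x => Real.rpow_nonneg (dot_self_nonneg' _) _)
    (hnm.pow_const (3 * α)).aestronglyMeasurable]
  refine ENNReal.toReal_le_of_le_ofReal (by positivity) ?_
  have hpt : ∀ x, ENNReal.ofReal (nsq (u x) ^ (3 * α)) ≤
      ENNReal.ofReal (4 ^ (3 * α - 1)) * ∑ a, ‖u x a‖ₑ ^ (6 * α) := fun x => by
    have h1 := Real.rpow_sum_le_const_mul_sum_rpow_of_nonneg (s := Finset.univ)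
      (f := fun a => u x a * u x a) (p := 3 * α) (by linarith) (fun a _ => mul_self_nonneg _)
    have h2 := ENNReal.ofReal_le_ofReal h1
    rw [ENNReal.ofReal_mul (by positivity), ENNReal.ofReal_sum_of_nonneg
      (fun a _ => Real.rpow_nonneg (mul_self_nonneg _) _)] at h2
    refine h2.trans (le_of_eq ?_)
    have hcard : ((Finset.univ : Finset (Fin 4)).card : ℝ) = 4 := by simp
    rw [hcard]
    congr 1
    · refine Finset.sum_congr rfl fun a _ => ?_
      rw [← abs_mul_abs_self, ← pow_two, ← ENNReal.ofReal_rpow_of_nonneg (by positivity) (by linarith),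
        ENNReal.ofReal_pow (abs_nonneg _), ← Real.norm_eq_abs, ofReal_norm, ← ENNReal.rpow_natCast,
        ← ENNReal.rpow_mul]
      congr 1; push_cast; ring
  calc _ ≤ ∫⁻ x in D, ENNReal.ofReal (4 ^ (3 * α - 1)) * ∑ a, ‖u x a‖ₑ ^ (6 * α) := lintegral_mono hpt
    _ = ENNReal.ofReal (4 ^ (3 * α - 1)) * ∑ a, ∫⁻ x in D, ‖u x a‖ₑ ^ (6 * α) := by
        rw [lintegral_const_mul' _ _ (by finiteness), lintegral_finsetSum]
        exact fun a _ => (hum a).enorm.pow_const _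
    _ ≤ ENNReal.ofReal (4 ^ (3 * α - 1)) *
        ∑ a : Fin 4, ENNReal.ofReal (4 * (C + 1) * c ^ (α - 1) * ∫ x, e x) := by
        gcongr with a _
        exact hcomp a
    _ = _ := by
        rw [← ENNReal.ofReal_sum_of_nonneg (fun a _ => by positivity), ← ENNReal.ofReal_mul (by positivity)]
        congr 1
        simp
        ring
end
end
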